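/- Let 1 < p < q, s ≥ 1, β < 1 and (α+β)p > 1. Then ∫_1^∞ [(p/q) ∫_1^{s·x} (v^p−1)^{1/q−1} v^{p−2} dv] · x^{−αp} (x^p−1)^{−β} dx = (1/(pq)) B(1/p−1/q, 1/q) B(1−β, β+α−1/p) + (s^{p/q−1}/(p−q)) B(β+α−1/q, 1−β) · ∑_{k=0}^∞ [(1−1/q)_k (β+α−1/q)_k (1/p−1/q)_k / ((α+1−1/q)_k (1/p−1/q+1)_k · k!)] s^{−pk}. (That is, ∫_1^∞ arccosh_{p,q}(sx) x^{−αp}(x^p−1)^{−β} dx = (1/(pq)) B(1/p−1/q,1/q) B(1−β, β+α−1/p) + (s^{p/q−1}/(p−q)) B(β+α−1/q, 1−β) ₃F₂(1−1/q, β+α−1/q, 1/p−1/q; α+1−1/q, 1/p−1/q+1; s^{−p}).) -/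

import Mathlib

open MeasureTheory

/-- Ascending Pochhammer symbol `(a)_k = a (a+1) ⋯ (a+k-1)`. -/
noncomputable def poch (a : ℝ) (k : ℕ) : ℝ := ∏ i ∈ Finset.range k, (a + i)

/-- Euler's beta function `B(a,b) = Γ(a)Γ(b)/Γ(a+b)`. -/
noncomputable def betaR (a b : ℝ) : ℝ := Real.Gamma a * Real.Gamma b / Real.Gamma (a + b)

/-!
The substitution `t = x ^ (-p)` turns `arccosh_{p,q}` into a difference of incomplete beta
functions, `q * arccosh_{p,q} x = B(c, 1/q) - B_z(c, 1/q)` with `c = 1/p - 1/q` and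
`z = x ^ (-p)`, and turns the weight `x ^ (-αp) * (x ^ p - 1) ^ (-β)` into a beta weight on
`(0, 1)`. The constant part integrates to the product of two beta values. For the remaining part,
expand `(1 - t) ^ (1/q - 1)` binomially inside `B_z` and integrate term by term twice.

The interchanges hold up to the endpoint `s = 1` because `∑ |(a)_k / k!| / (c + k)` converges for
`a < 1`: once `k ≥ -a`, the differences `|(a)_k / k!| - |(a)_{k+1} / (k+1)!|` equal
`(1 - a) |(a)_k / k!| / (1 + k)`, so the sum telescopes.
-/

open Set
open scoped Nat

section Pochhammer

theorem poch_succ (a : ℝ) (k : ℕ) : poch a (k + 1) = poch a k * (a + k) :=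
  Finset.prod_range_succ _ _

theorem poch_eq_ascPochhammer_eval (a : ℝ) (k : ℕ) : poch a k = (ascPochhammer ℝ k).eval a := by
  induction k with
  | zero => simp [poch]
  | succ n ih => rw [poch_succ, ih, ascPochhammer_succ_eval]

theorem poch_pos {a : ℝ} (ha : 0 < a) (k : ℕ) : 0 < poch a k :=
  Finset.prod_pos fun _ _ => by positivity

theorem poch_le_poch {a b : ℝ} (ha : 0 ≤ a) (hab : a ≤ b) (k : ℕ) : poch a k ≤ poch b k :=
  Finset.prod_le_prod (fun _ _ => by positivity) fun _ _ => by gcongr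

theorem poch_mul_add (a : ℝ) (k : ℕ) : poch a k * (a + k) = a * poch (a + 1) k := by
  rw [← poch_succ, poch, poch, Finset.prod_range_succ', mul_comm]
  push_cast
  simp only [add_zero, add_assoc, add_comm (1 : ℝ)]

theorem hasSum_poch_div_factorial_mul_pow (a : ℝ) {z : ℝ} (hz : |z| < 1) :
    HasSum (fun k => poch a k / k ! * z ^ k) ((1 - z) ^ (-a)) := by
  have hz' : z ∈ Metric.eball (0 : ℝ) 1 := by simpa [Metric.mem_eball, edist_dist] using hz
  have coeff (k : ℕ) : Ring.choose (a + k - 1) k = poch a k / k ! := by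
    rw [← Ring.multichoose_eq, eq_div_iff (by positivity), mul_comm, ← nsmul_eq_mul,
      Ring.factorial_nsmul_multichoose_eq_ascPochhammer, Polynomial.ascPochhammer_smeval_eq_eval,
      poch_eq_ascPochhammer_eval]
  have h := (Real.one_div_one_sub_rpow_hasFPowerSeriesOnBall_zero a).hasSum hz'
  rw [Real.rpow_neg (sub_pos.2 (abs_lt.1 hz).2).le, ← one_div]
  simpa [coeff, mul_comm] using h

theorem abs_poch_div_factorial_sub_succ {a : ℝ} {k : ℕ} (h : 0 ≤ a + k) :
    |poch a k / k !| - |poch a (k + 1) / (k + 1)!| = (1 - a) * (|poch a k / k !| / (1 + k)) := by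
  rw [poch_succ, Nat.factorial_succ, Nat.cast_mul, mul_comm ((k + 1 : ℕ) : ℝ), mul_div_mul_comm,
    abs_mul, abs_of_nonneg (div_nonneg h (Nat.cast_nonneg _))]
  push_cast
  field_simp
  ring

theorem summable_abs_poch_div_factorial_div_one_add {a : ℝ} (ha : a < 1) :
    Summable fun k : ℕ => |poch a k / k !| / (1 + k) := by
  obtain ⟨N, hN⟩ := exists_nat_ge (-a)
  refine (summable_nat_add_iff N).1 <| summable_of_sum_range_le (c := |poch a N / N !| / (1 - a))
    (fun k => by positivity) fun n => ?_
  rw [le_div_iff₀' (sub_pos.2 ha), Finset.mul_sum]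
  calc ∑ k ∈ Finset.range n, (1 - a) * (|poch a (k + N) / (k + N)!| / (1 + (k + N : ℕ)))
      = ∑ k ∈ Finset.range n,
          (|poch a (k + N) / (k + N)!| - |poch a (k + 1 + N) / (k + 1 + N)!|) := by
        refine Finset.sum_congr rfl fun k _ => ?_
        rw [add_right_comm k 1 N, abs_poch_div_factorial_sub_succ]
        push_cast
        linarith [k.cast_nonneg (α := ℝ)]
    _ = |poch a N / N !| - |poch a (n + N) / (n + N)!| := by
        rw [Finset.sum_range_sub' (fun k => |poch a (k + N) / (k + N)!|), zero_add]
    _ ≤ |poch a N / N !| := sub_le_self _ (abs_nonneg _)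

theorem summable_poch_div_factorial_div_add {a c : ℝ} (ha : a < 1) (hc : 0 < c) :
    Summable fun k => poch a k / k ! / (c + k) := by
  refine ((summable_abs_poch_div_factorial_div_one_add ha).mul_left
    (max 1 c⁻¹)).of_norm_bounded fun k => ?_
  have denominator_le : 1 + (k : ℝ) ≤ max 1 c⁻¹ * (c + k) := by
    have const_le : c⁻¹ * c ≤ max 1 c⁻¹ * c := by gcongr; exact le_max_right _ _
    have index_le : 1 * (k : ℝ) ≤ max 1 c⁻¹ * k := by gcongr; exact le_max_left _ _
    rw [inv_mul_cancel₀ hc.ne'] at const_le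
    linarith
  rw [norm_div, Real.norm_eq_abs, Real.norm_of_nonneg (by positivity), mul_div_assoc',
    div_le_div_iff₀ (by positivity) (by positivity), mul_assoc, mul_left_comm]
  gcongr

end Pochhammer

section Beta

theorem betaR_pos {a b : ℝ} (ha : 0 < a) (hb : 0 < b) : 0 < betaR a b :=
  ProbabilityTheory.beta_pos ha hb

theorem betaR_comm (a b : ℝ) : betaR a b = betaR b a := by
  rw [betaR, betaR, add_comm, mul_comm (Real.Gamma a)]

theorem Gamma_add_natCast {a : ℝ} (ha : 0 < a) (k : ℕ) :
    Real.Gamma (a + k) = poch a k * Real.Gamma a := by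
  induction k with
  | zero => simp [poch]
  | succ n ih =>
    rw [poch_succ, Nat.cast_succ, ← add_assoc, Real.Gamma_add_one (by positivity), ih]
    ring

theorem betaR_add_natCast {a b : ℝ} (ha : 0 < a) (hb : 0 < b) (k : ℕ) :
    betaR (a + k) b = betaR a b * (poch a k / poch (a + b) k) := by
  rw [betaR, betaR, add_right_comm, Gamma_add_natCast ha, Gamma_add_natCast (add_pos ha hb)]
  ring

theorem betaR_add_natCast_le {a b : ℝ} (ha : 0 < a) (hb : 0 < b) (k : ℕ) :
    betaR (a + k) b ≤ betaR a b := by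
  rw [betaR_add_natCast ha hb]
  exact mul_le_of_le_one_right (betaR_pos ha hb).le <|
    div_le_one_of_le₀ (poch_le_poch ha.le (by linarith) k) (poch_pos (add_pos ha hb) k).le

theorem eqOn_betaIntegrand_ofReal (a b : ℝ) : EqOn
    (fun t : ℝ => (t : ℂ) ^ ((a : ℂ) - 1) * (1 - (t : ℂ)) ^ ((b : ℂ) - 1))
    (fun t : ℝ => ((t ^ (a - 1) * (1 - t) ^ (b - 1) : ℝ) : ℂ)) (Icc 0 1) := fun t ht => by
  push_cast [Complex.ofReal_cpow ht.1, Complex.ofReal_cpow (sub_nonneg.2 ht.2)]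
  rfl

theorem intervalIntegrable_beta {a b : ℝ} (ha : 0 < a) (hb : 0 < b) :
    IntervalIntegrable (fun t : ℝ => t ^ (a - 1) * (1 - t) ^ (b - 1)) volume 0 1 := by
  have h := Complex.betaIntegral_convergent (u := a) (v := b) (by simpa) (by simpa)
  rw [intervalIntegrable_iff_integrableOn_Icc_of_le zero_le_one] at h ⊢
  simpa [IntegrableOn] using
    ((integrableOn_congr_fun (eqOn_betaIntegrand_ofReal a b) measurableSet_Icc).1 h).re

theorem integral_beta {a b : ℝ} (ha : 0 < a) (hb : 0 < b) :
    ∫ t in (0 : ℝ)..1, t ^ (a - 1) * (1 - t) ^ (b - 1) = betaR a b := by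
  have h := ProbabilityTheory.beta_eq_betaIntegralReal a b ha hb
  rw [Complex.betaIntegral, intervalIntegral.integral_congr
      (by simpa only [uIcc_of_le zero_le_one] using eqOn_betaIntegrand_ofReal a b),
    intervalIntegral.integral_ofReal, Complex.ofReal_re] at h
  exact h.symm

/-- The incomplete beta function `B_z(a, b)`, meant for `0 ≤ z ≤ 1`; at `z = 1` it is `B(a, b)`. -/
noncomputable def incBeta (a b z : ℝ) : ℝ := ∫ t in (0 : ℝ)..z, t ^ (a - 1) * (1 - t) ^ (b - 1)

theorem incBeta_one {a b : ℝ} (ha : 0 < a) (hb : 0 < b) : incBeta a b 1 = betaR a b :=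
  integral_beta ha hb

theorem continuousOn_incBeta {a b : ℝ} (ha : 0 < a) (hb : 0 < b) :
    ContinuousOn (incBeta a b) (uIcc 0 1) :=
  intervalIntegral.continuousOn_primitive_interval <|
    (intervalIntegrable_iff' (by finiteness)).1 (intervalIntegrable_beta ha hb)

theorem betaR_sub_incBeta {a b z : ℝ} (ha : 0 < a) (hb : 0 < b) (hz : z ∈ uIcc (0 : ℝ) 1) :
    betaR a b - incBeta a b z = ∫ t in z..1, t ^ (a - 1) * (1 - t) ^ (b - 1) := by
  have h := intervalIntegrable_beta ha hb
  rw [← incBeta_one ha hb]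
  exact intervalIntegral.integral_interval_sub_left h (h.mono_set (uIcc_subset_uIcc_left hz))

end Beta

section Series

theorem hasSum_integral_of_summable_coeff_mul_integral {X : Type*} [MeasurableSpace X]
    {μ : Measure X} {u : ℕ → ℝ} {g : ℕ → X → ℝ} {f : X → ℝ}
    (hg : ∀ k, Integrable (g k) μ) (hg0 : ∀ k, 0 ≤ᵐ[μ] g k)
    (hsum : Summable fun k => u k * ∫ x, g k x ∂μ)
    (hf : ∀ᵐ x ∂μ, HasSum (fun k => u k * g k x) (f x)) :
    HasSum (fun k => u k * ∫ x, g k x ∂μ) (∫ x, f x ∂μ) := by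
  have norm_eq (k : ℕ) : ∫ x, ‖u k * g k x‖ ∂μ = ‖u k * ∫ x, g k x ∂μ‖ := by
    simp only [norm_mul, integral_const_mul,
      Real.norm_of_nonneg (integral_nonneg_of_ae (hg0 k))]
    congr 1
    exact integral_congr_ae ((hg0 k).mono fun _ hx => Real.norm_of_nonneg hx)
  have h := hasSum_integral_of_summable_integral_norm (fun k => (hg k).const_mul (u k))
    (by simpa only [norm_eq] using hsum.norm)
  simpa only [integral_const_mul, integral_congr_ae (hf.mono fun _ hx => hx.tsum_eq)] using h

theorem summable_poch_mul_rpow_div {b c z : ℝ} (hb : 0 < b) (hc : 0 < c) (hz0 : 0 ≤ z)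
    (hz1 : z ≤ 1) : Summable fun k : ℕ => poch (1 - b) k / k ! * (z ^ (c + k) / (c + k)) := by
  refine (summable_poch_div_factorial_div_add (sub_lt_self 1 hb) hc).norm.of_norm_bounded
    fun k => ?_
  rw [mul_div_left_comm, norm_mul]
  exact mul_le_of_le_one_left (norm_nonneg _) <| by
    rw [Real.norm_of_nonneg (by positivity)]
    exact Real.rpow_le_one hz0 hz1 (by positivity)

theorem hasSum_incBeta {b c z : ℝ} (hb : 0 < b) (hc : 0 < c) (hz0 : 0 ≤ z) (hz1 : z ≤ 1) :
    HasSum (fun k : ℕ => poch (1 - b) k / k ! * (z ^ (c + k) / (c + k))) (incBeta c b z) := by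
  have exponent (k : ℕ) : -1 < c + k - 1 := by linarith [k.cast_nonneg (α := ℝ)]
  have monomial_integral (k : ℕ) :
      ∫ t in Ioo 0 z, t ^ (c + k - 1) = z ^ (c + k) / (c + k) := by
    rw [← integral_Ioc_eq_integral_Ioo, ← intervalIntegral.integral_of_le hz0,
      integral_rpow (.inl (exponent k)), sub_add_cancel, Real.zero_rpow (by positivity), sub_zero]
  rw [incBeta, intervalIntegral.integral_of_le hz0, integral_Ioc_eq_integral_Ioo]
  simp only [← monomial_integral]
  refine hasSum_integral_of_summable_coeff_mul_integral (fun k => ?_) (fun k => ?_) ?_ ?_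
  · exact (intervalIntegrable_iff_integrableOn_Ioo_of_le hz0).1
      (intervalIntegral.intervalIntegrable_rpow' (exponent k))
  · filter_upwards [ae_restrict_mem measurableSet_Ioo] with t ht using Real.rpow_nonneg ht.1.le _
  · simpa only [monomial_integral] using summable_poch_mul_rpow_div hb hc hz0 hz1
  · filter_upwards [ae_restrict_mem measurableSet_Ioo] with t ⟨ht0, htz⟩
    have binomial := hasSum_poch_div_factorial_mul_pow (1 - b)
      (abs_lt.2 ⟨by linarith, htz.trans_le hz1⟩)
    rw [neg_sub] at binomial
    convert! binomial.mul_left (t ^ (c - 1)) using 1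
    funext k
    rw [add_sub_right_comm, Real.rpow_add_natCast ht0.ne']
    ring

theorem hasSum_integral_incBeta_mul {b c d e z : ℝ} (hb : 0 < b) (hc : 0 < c) (hcd : 0 < c + d)
    (he : 0 < e) (hz0 : 0 ≤ z) (hz1 : z ≤ 1) :
    HasSum (fun k : ℕ => poch (1 - b) k / k ! * (z ^ (c + k) / (c + k)) * betaR (c + d + k) e)
      (∫ t in (0 : ℝ)..1, incBeta c b (z * t) * (t ^ (d - 1) * (1 - t) ^ (e - 1))) := by
  have hcdk (k : ℕ) : 0 < c + d + k := by positivity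
  have integral_eq (k : ℕ) :
      ∫ t in Ioo (0 : ℝ) 1, t ^ (c + d + k - 1) * (1 - t) ^ (e - 1) = betaR (c + d + k) e := by
    rw [← integral_Ioc_eq_integral_Ioo, ← intervalIntegral.integral_of_le zero_le_one,
      integral_beta (hcdk k) he]
  rw [intervalIntegral.integral_of_le zero_le_one, integral_Ioc_eq_integral_Ioo]
  simp only [← integral_eq]
  refine hasSum_integral_of_summable_coeff_mul_integral (fun k => ?_) (fun k => ?_) ?_ ?_
  · exact (intervalIntegrable_iff_integrableOn_Ioo_of_le zero_le_one).1
      (intervalIntegrable_beta (hcdk k) he)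
  · filter_upwards [ae_restrict_mem measurableSet_Ioo] with t ⟨ht0, ht1⟩
    exact mul_nonneg (Real.rpow_nonneg ht0.le _) (Real.rpow_nonneg (sub_nonneg.2 ht1.le) _)
  · simp only [integral_eq]
    refine ((summable_poch_mul_rpow_div hb hc hz0 hz1).norm.mul_right
      (betaR (c + d) e)).of_norm_bounded fun k => ?_
    rw [norm_mul, Real.norm_of_nonneg (betaR_pos (hcdk k) he).le]
    gcongr
    exact betaR_add_natCast_le hcd he k
  · filter_upwards [ae_restrict_mem measurableSet_Ioo] with t ⟨ht0, ht1⟩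
    have h := hasSum_incBeta hb hc (mul_nonneg hz0 ht0.le) (mul_le_one₀ hz1 ht0.le ht1.le)
    convert! h.mul_right (t ^ (d - 1) * (1 - t) ^ (e - 1)) using 1
    funext k
    rw [Real.mul_rpow hz0 ht0.le, show c + d + k - 1 = (c + k) + (d - 1) by ring,
      Real.rpow_add ht0]
    ring

theorem integral_incBeta_mul {b c d e z : ℝ} (hb : 0 < b) (hc : 0 < c) (hcd : 0 < c + d)
    (he : 0 < e) (hz0 : 0 < z) (hz1 : z ≤ 1) :
    ∫ t in (0 : ℝ)..1, incBeta c b (z * t) * (t ^ (d - 1) * (1 - t) ^ (e - 1)) =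
      z ^ c / c * betaR (c + d) e *
        ∑' k : ℕ, poch (1 - b) k * poch (c + d) k * poch c k /
          (poch (c + d + e) k * poch (c + 1) k * k !) * z ^ k := by
  rw [← (hasSum_integral_incBeta_mul hb hc hcd he hz0.le hz1).tsum_eq, ← tsum_mul_left]
  refine tsum_congr fun k => ?_
  have inv_add : 1 / (c + k) = poch c k / poch (c + 1) k / c := by
    have := (poch_pos (add_pos hc one_pos) k).ne'
    rw [div_div, div_eq_div_iff (by positivity) (by positivity), one_mul, poch_mul_add]
    ring
  rw [betaR_add_natCast hcd he, Real.rpow_add_natCast hz0.ne', div_eq_mul_one_div _ (c + (k : ℝ)),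
    inv_add]
  ring

theorem integral_betaR_sub_incBeta_mul {b c d e z : ℝ} (hb : 0 < b) (hc : 0 < c) (hd : 0 < d)
    (he : 0 < e) (hz0 : 0 < z) (hz1 : z ≤ 1) :
    ∫ t in (0 : ℝ)..1, (betaR c b - incBeta c b (z * t)) * (t ^ (d - 1) * (1 - t) ^ (e - 1)) =
      betaR c b * betaR d e - z ^ c / c * betaR (c + d) e *
        ∑' k : ℕ, poch (1 - b) k * poch (c + d) k * poch c k /
          (poch (c + d + e) k * poch (c + 1) k * k !) * z ^ k := by
  have weight := intervalIntegrable_beta hd he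
  have maps : MapsTo (z * ·) (uIcc (0 : ℝ) 1) (uIcc 0 1) := by
    simp only [uIcc_of_le zero_le_one]
    exact fun t ht => ⟨mul_nonneg hz0.le ht.1, mul_le_one₀ hz1 ht.1 ht.2⟩
  have cont : ContinuousOn (fun t => incBeta c b (z * t)) (uIcc 0 1) :=
    (continuousOn_incBeta hc hb).comp (continuous_const_mul z).continuousOn maps
  simp only [sub_mul]
  rw [intervalIntegral.integral_sub (weight.const_mul _) (weight.continuousOn_mul cont),
    intervalIntegral.integral_const_mul, integral_beta hd he,
    integral_incBeta_mul hb hc (add_pos hc hd) he hz0 hz1]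

end Series

section Substitution

theorem image_rpow_neg_Ioi_one {p : ℝ} (hp : 0 < p) :
    (fun x : ℝ => x ^ (-p)) '' Ioi 1 = Ioo 0 1 := by
  refine Subset.antisymm ?_ fun t ht => ⟨t ^ (-p)⁻¹, ?_, Real.rpow_inv_rpow ht.1.le (by linarith)⟩
  · rintro _ ⟨x, hx, rfl⟩
    exact ⟨Real.rpow_pos_of_pos (one_pos.trans hx) _,
      Real.rpow_lt_one_of_one_lt_of_neg hx (neg_neg_of_pos hp)⟩
  · exact Real.one_lt_rpow_of_pos_of_lt_one_of_neg ht.1 ht.2 (inv_lt_zero.2 (neg_neg_of_pos hp))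

theorem image_rpow_neg_Ioo_one {p y : ℝ} (hp : 0 < p) (hy : 0 < y) :
    (fun x : ℝ => x ^ (-p)) '' Ioo 1 y = Ioo (y ^ (-p)) 1 := by
  have lt_iff {x : ℝ} (hx : 0 < x) : y ^ (-p) < x ^ (-p) ↔ x < y :=
    Real.rpow_lt_rpow_iff_of_neg hy hx (neg_neg_of_pos hp)
  rw [← Ioi_inter_Iio]
  ext t
  constructor
  · rintro ⟨x, ⟨hx1, hxy⟩, rfl⟩
    exact ⟨(lt_iff (one_pos.trans hx1)).2 hxy,
      Real.rpow_lt_one_of_one_lt_of_neg hx1 (neg_neg_of_pos hp)⟩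
  · rintro ⟨hyt, ht1⟩
    obtain ⟨x, hx1, rfl⟩ := (image_rpow_neg_Ioi_one hp).ge
      ⟨(Real.rpow_pos_of_pos hy _).trans hyt, ht1⟩
    exact ⟨x, ⟨hx1, (lt_iff (one_pos.trans hx1)).1 hyt⟩, rfl⟩

theorem rpow_mul_rpow_sub_one_rpow {p a b x : ℝ} (hp : 0 < p) (hx : 1 < x) :
    x ^ (-(a * p)) * (x ^ p - 1) ^ (-b) =
      x ^ (-p - 1) * ((x ^ (-p)) ^ (a + b - 1 / p - 1) * (1 - x ^ (-p)) ^ (-b)) := by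
  have hx0 : 0 < x := one_pos.trans hx
  have factor : x ^ p - 1 = x ^ p * (1 - x ^ (-p)) := by
    rw [mul_sub, ← Real.rpow_add hx0, add_neg_cancel, Real.rpow_zero, mul_one]
  have nonneg : 0 ≤ 1 - x ^ (-p) :=
    sub_nonneg.2 (Real.rpow_lt_one_of_one_lt_of_neg hx (neg_neg_of_pos hp)).le
  rw [factor, Real.mul_rpow (by positivity) nonneg, ← Real.rpow_mul hx0.le, ← Real.rpow_mul hx0.le,
    ← mul_assoc, ← mul_assoc, ← Real.rpow_add hx0, ← Real.rpow_add hx0]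
  congr 2
  field_simp
  ring

theorem setIntegral_comp_rpow_neg {p a b : ℝ} (hp : 0 < p) {S : Set ℝ} (hS : MeasurableSet S)
    (hS1 : S ⊆ Ioi 1) (h : ℝ → ℝ) :
    ∫ x in S, h (x ^ (-p)) * (x ^ (-(a * p)) * (x ^ p - 1) ^ (-b)) =
      1 / p * ∫ t in (fun x : ℝ => x ^ (-p)) '' S,
        h t * (t ^ (a + b - 1 / p - 1) * (1 - t) ^ (-b)) := by
  have pos : ∀ x ∈ S, 0 < x := fun x hx => one_pos.trans (hS1 hx)
  rw [integral_image_eq_integral_abs_deriv_smul hS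
    (fun x hx => (Real.hasDerivAt_rpow_const (.inl (pos x hx).ne')).hasDerivWithinAt)
    ((Real.rpow_left_injOn (neg_neg_of_pos hp).ne).mono fun x hx => (pos x hx).le),
    ← integral_const_mul]
  refine setIntegral_congr_fun hS fun x hx => ?_
  have deriv_abs : |-p * x ^ (-p - 1)| = p * x ^ (-p - 1) := by
    rw [abs_mul, abs_neg, abs_of_pos hp, abs_of_pos (Real.rpow_pos_of_pos (pos x hx) _)]
  simp only [smul_eq_mul, deriv_abs, rpow_mul_rpow_sub_one_rpow hp (hS1 hx)]
  field_simp

end Substitution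

/-- The generalized `(p, q)`-hyperbolic arccosine `arccosh_{p,q}`, meant for `1 ≤ x`. -/
noncomputable def arccoshPQ (p q x : ℝ) : ℝ :=
  (p / q) * ∫ v in (1 : ℝ)..x, (v ^ p - 1) ^ (1 / q - 1) * v ^ (p - 2)

theorem arccoshPQ_eq_betaR_sub_incBeta {p q x : ℝ} (hp : 0 < p) (hpq : p < q) (hx : 1 ≤ x) :
    arccoshPQ p q x =
      1 / q * (betaR (1 / p - 1 / q) (1 / q) - incBeta (1 / p - 1 / q) (1 / q) (x ^ (-p))) := by
  have hq : 0 < 1 / q := one_div_pos.2 (hp.trans hpq)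
  have hc : 0 < 1 / p - 1 / q := sub_pos.2 (one_div_lt_one_div_of_lt hp hpq)
  have hx0 : 0 < x := one_pos.trans_le hx
  have hz0 : 0 ≤ x ^ (-p) := Real.rpow_nonneg hx0.le _
  have hz1 : x ^ (-p) ≤ 1 := Real.rpow_le_one_of_one_le_of_nonpos hx (neg_nonpos.2 hp.le)
  have subst := setIntegral_comp_rpow_neg (a := (2 - p) / p) (b := 1 - 1 / q) hp
    (measurableSet_Ioo (a := 1) (b := x)) Ioo_subset_Ioi_self 1
  have exponent : (2 - p) / p + (1 - 1 / q) - 1 / p = 1 / p - 1 / q := by field_simp; ring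
  simp only [Pi.one_apply, one_mul, image_rpow_neg_Ioo_one hp hx0, exponent, neg_sub,
    div_mul_cancel₀ _ hp.ne', mul_comm (_ ^ (p - 2))] at subst
  rw [arccoshPQ, betaR_sub_incBeta hc hq (by rw [uIcc_of_le zero_le_one]; exact ⟨hz0, hz1⟩),
    intervalIntegral.integral_of_le hx, intervalIntegral.integral_of_le hz1,
    integral_Ioc_eq_integral_Ioo, integral_Ioc_eq_integral_Ioo, subst]
  field_simp

theorem integral_arccoshPQ_mul {p q α β s : ℝ} (hp : 0 < p) (hpq : p < q) (hs : 1 ≤ s) :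
    ∫ x in Ioi (1 : ℝ), arccoshPQ p q (s * x) * (x ^ (-(α * p)) * (x ^ p - 1) ^ (-β)) =
      1 / (p * q) * ∫ t in (0 : ℝ)..1,
        (betaR (1 / p - 1 / q) (1 / q) - incBeta (1 / p - 1 / q) (1 / q) (s ^ (-p) * t)) *
          (t ^ (α + β - 1 / p - 1) * (1 - t) ^ (-β)) := by
  have subst := setIntegral_comp_rpow_neg (a := α) (b := β) hp measurableSet_Ioi subset_rfl
    fun t => betaR (1 / p - 1 / q) (1 / q) - incBeta (1 / p - 1 / q) (1 / q) (s ^ (-p) * t)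
  rw [image_rpow_neg_Ioi_one hp, ← integral_Ioc_eq_integral_Ioo,
    ← intervalIntegral.integral_of_le zero_le_one] at subst
  rw [mul_comm p, ← one_div_mul_one_div, mul_assoc, ← subst, ← integral_const_mul]
  refine setIntegral_congr_fun measurableSet_Ioi fun x (hx : 1 < x) => ?_
  simp only [arccoshPQ_eq_betaR_sub_incBeta hp hpq (one_le_mul_of_one_le_of_one_le hs hx.le),
    Real.mul_rpow (zero_le_one.trans hs) (zero_le_one.trans hx.le), mul_assoc]

theorem arccosh_pq_integral_general {p q α β s : ℝ} (hp : 0 < p) (hpq : p < q)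
    (hs : 1 ≤ s) (hβ : β < 1) (hαβ : 1 < (α + β) * p) :
    (∫ x in Ioi (1 : ℝ), arccoshPQ p q (s * x) * x ^ (-(α * p)) * (x ^ p - 1) ^ (-β)) =
      (1 / (p * q)) * betaR (1 / p - 1 / q) (1 / q) * betaR (1 - β) (β + α - 1 / p) +
      (s ^ (p / q - 1) / (p - q)) * betaR (β + α - 1 / q) (1 - β) *
        ∑' k : ℕ, poch (1 - 1 / q) k * poch (β + α - 1 / q) k * poch (1 / p - 1 / q) k /
          (poch (α + 1 - 1 / q) k * poch (1 / p - 1 / q + 1) k * k !) * s ^ (-(p * k)) := by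
  have hq : 0 < q := hp.trans hpq
  have hs0 : 0 < s := one_pos.trans_le hs
  have hc : 0 < 1 / p - 1 / q := sub_pos.2 (one_div_lt_one_div_of_lt hp hpq)
  have hd : 0 < α + β - 1 / p := sub_pos.2 ((div_lt_iff₀ hp).2 hαβ)
  have main := integral_betaR_sub_incBeta_mul (one_div_pos.2 hq) hc hd (sub_pos.2 hβ)
    (Real.rpow_pos_of_pos hs0 (-p)) (Real.rpow_le_one_of_one_le_of_nonpos hs (neg_nonpos.2 hp.le))
  have power : (s ^ (-p)) ^ (1 / p - 1 / q) = s ^ (p / q - 1) := by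
    rw [← Real.rpow_mul hs0.le]
    congr 1
    field_simp
    ring
  have powers (k : ℕ) : (s ^ (-p)) ^ k = s ^ (-(p * k)) := by
    rw [← Real.rpow_mul_natCast hs0.le, neg_mul]
  have param₁ : 1 / p - 1 / q + (α + β - 1 / p) = β + α - 1 / q := by ring
  have param₂ : β + α - 1 / q + (1 - β) = α + 1 - 1 / q := by ring
  have prefactor : 1 / (p * q) / (1 / p - 1 / q) = -(1 / (p - q)) := by
    rw [div_sub_div _ _ hp.ne' hq.ne', one_mul, mul_one,
      div_div_div_cancel_right₀ (mul_pos hp hq).ne', ← neg_sub p q, div_neg]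
  simp only [mul_assoc (arccoshPQ _ _ _)]
  rw [integral_arccoshPQ_mul hp hpq hs, ← sub_sub_cancel_left 1 β]
  simp only [main, power, powers, param₁, param₂]
  rw [betaR_comm (1 - β), add_comm β α]
  generalize (∑' _ : ℕ, _ : ℝ) = S
  linear_combination (-(s ^ (p / q - 1) * betaR (α + β - 1 / q) (1 - β) * S)) * prefactor

theorem arccosh_pq_integral (p q α β s : ℝ) (hp : 1 < p) (hpq : p < q)
    (hs : 1 ≤ s) (hβ : β < 1) (hαβ : 1 < (α + β) * p) :
    (∫ x in Set.Ioi (1:ℝ),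
        ((p / q) * ∫ v in (1:ℝ)..(s * x), (v ^ p - 1) ^ (1 / q - 1) * v ^ (p - 2)) *
          x ^ (-(α * p)) * (x ^ p - 1) ^ (-β)) =
      (1 / (p * q)) * betaR (1 / p - 1 / q) (1 / q) * betaR (1 - β) (β + α - 1 / p) +
      (s ^ (p / q - 1) / (p - q)) * betaR (β + α - 1 / q) (1 - β) *
        ∑' k : ℕ, poch (1 - 1 / q) k * poch (β + α - 1 / q) k * poch (1 / p - 1 / q) k /
          (poch (α + 1 - 1 / q) k * poch (1 / p - 1 / q + 1) k * (Nat.factorial k : ℝ)) *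
            s ^ (-(p * (k : ℝ))) :=
  arccosh_pq_integral_general (one_pos.trans hp) hpq hs hβ hαβ
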